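/- arXiv:1909.04881 — 6 statements merged into one kernel-verified Lean document; each statement's English description precedes it below -/
import Mathlib

section
/- For all APGs G₁ and G₂, the APG G₁ × G₂ defined by (G₁ × G₂)(𝓛) := G₁(𝓛) × G₂(𝓛), (G₁ × G₂)(𝓔) := G₁(𝓔) × G₂(𝓔), (G₁ × G₂)(λ)(e₁, e₂) := (G₁(λ)(e₁), G₂(λ)(e₂)), (G₁ × G₂)(σ)(l₁, l₂) := ⋄_{l ↦ Lbl(l, l₂)}(G₁(σ)(l₁)) × ⋄_{l ↦ Lbl(l₁, l)}(G₂(σ)(l₂)), and (G₁ × G₂)(υ)(e₁, e₂) := (⋄^{e ↦ Id(e, e₂)}_{l ↦ Lbl(l, G₂(λ)(e₂))}(G₁(υ)(e₁)), ⋄^{e ↦ Id(e₁, e)}_{l ↦ Lbl(G₁(λ)(e₁), l)}(G₂(υ)(e₂))), together with the projection morphisms given componentwise by the set-theoretic projections, is a product of G₁ and G₂ in the category APG: for every APG G and morphisms p : G → G₁ and q : G → G₂ there is a unique morphism (p, q) : G → G₁ × G₂ whose composites with the projections are p and q respectively. -/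
/-- Types over a set `P` of primitive types and a set `L` of labels. -/
inductive Ty (P : Type) (L : Type) : Type
  | zero : Ty P L
  | one : Ty P L
  | sum : Ty P L → Ty P L → Ty P L
  | prod : Ty P L → Ty P L → Ty P L
  | prim : P → Ty P L
  | lbl : L → Ty P L

/-- Values over `(L, E, lab)`, intrinsically typed. -/
inductive Val (P : Type) (V : P → Type) (L : Type) (E : Type) (lab : E → L) :
    Ty P L → Type
  | unit : Val P V L E lab .one
  | inl {t₁ t₂ : Ty P L} : Val P V L E lab t₁ → Val P V L E lab (.sum t₁ t₂)
  | inr {t₁ t₂ : Ty P L} : Val P V L E lab t₂ → Val P V L E lab (.sum t₁ t₂)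
  | pair {t₁ t₂ : Ty P L} : Val P V L E lab t₁ → Val P V L E lab t₂ →
      Val P V L E lab (.prod t₁ t₂)
  | prim (p : P) : V p → Val P V L E lab (.prim p)
  | id (e : E) : Val P V L E lab (.lbl (lab e))

/-- The set `G(𝓥)` of all values: a value paired with its type.
The typing function `τ` is `Sigma.fst`. -/
def VSig (P : Type) (V : P → Type) (L : Type) (E : Type) (lab : E → L) : Type :=
  Σ t : Ty P L, Val P V L E lab t

/-- An algebraic property graph over primitives `P` with primitive values `V`. -/
structure APG (P : Type) (V : P → Type) : Type 1 where
  L : Type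
  E : Type
  lab : E → L
  sch : L → Ty P L
  val : E → VSig P V L E lab
  coh : ∀ e, (val e).1 = sch (lab e)

/-- A morphism of APGs: label and element functions commuting with labeling. -/
@[ext]
structure APG.Hom {P : Type} {V : P → Type} (G₁ G₂ : APG P V) : Type where
  fL : G₁.L → G₂.L
  fE : G₁.E → G₂.E
  nat : ∀ e, fL (G₁.lab e) = G₂.lab (fE e)

/-- The identity APG morphism: the pair of identity functions. -/
def APG.Hom.idHom {P : Type} {V : P → Type} (G : APG P V) : APG.Hom G G :=
  ⟨fun l => l, fun e => e, fun _ => rfl⟩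

/-- Composition of APG morphisms: componentwise composition. -/
def APG.Hom.comp {P : Type} {V : P → Type} {G₁ G₂ G₃ : APG P V}
    (f : APG.Hom G₁ G₂) (g : APG.Hom G₂ G₃) : APG.Hom G₁ G₃ :=
  ⟨g.fL ∘ f.fL, g.fE ∘ f.fE, fun e => by
    simp only [Function.comp_apply]; rw [f.nat, g.nat]⟩

/-- `⋄_f`: transport of types along a function `f` from labels to types:
it replaces each `Lbl l` by `f l`, fixes `0`, `1` and `Prim p`, and commutes
with `+` and `×`. -/
def Ty.transport {P : Type} {L₁ L₂ : Type} (f : L₁ → Ty P L₂) : Ty P L₁ → Ty P L₂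
  | .zero => .zero
  | .one => .one
  | .sum t₁ t₂ => .sum (t₁.transport f) (t₂.transport f)
  | .prod t₁ t₂ => .prod (t₁.transport f) (t₂.transport f)
  | .prim p => .prim p
  | .lbl l => f l

/-- `⋄^g_f`: transport of values along `f` (on labels) and `g` (on elements):
it replaces each `Id e` by `g e`, fixes `()` and `Prim d`, and commutes with
`inl`, `inr` and pairing. -/
def Val.transport {P : Type} {V : P → Type} {L₁ E₁ : Type} {lab₁ : E₁ → L₁}
    {L₂ E₂ : Type} {lab₂ : E₂ → L₂}
    (f : L₁ → Ty P L₂) (g : (e : E₁) → Val P V L₂ E₂ lab₂ (f (lab₁ e))) :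
    {t : Ty P L₁} → Val P V L₁ E₁ lab₁ t → Val P V L₂ E₂ lab₂ (t.transport f)
  | _, .unit => .unit
  | _, .inl v => .inl (v.transport f g)
  | _, .inr v => .inr (v.transport f g)
  | _, .pair v₁ v₂ => .pair (v₁.transport f g) (v₂.transport f g)
  | _, .prim p d => .prim p d
  | _, .id e => g e

/-- `⋄^g_f` on typed values (elements of `G(𝓥)`). -/
def VSig.transport {P : Type} {V : P → Type} {L₁ E₁ : Type} {lab₁ : E₁ → L₁}
    {L₂ E₂ : Type} {lab₂ : E₂ → L₂}
    (f : L₁ → Ty P L₂) (g : (e : E₁) → Val P V L₂ E₂ lab₂ (f (lab₁ e)))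
    (v : VSig P V L₁ E₁ lab₁) : VSig P V L₂ E₂ lab₂ :=
  ⟨v.1.transport f, v.2.transport f g⟩

variable {P : Type} {V : P → Type}

/-- Labeling function of the product APG. -/
def APG.prodLab (G₁ G₂ : APG P V) : G₁.E × G₂.E → G₁.L × G₂.L :=
  fun e => (G₁.lab e.1, G₂.lab e.2)

/-- The product APG `G₁ × G₂`. -/
def APG.prod (G₁ G₂ : APG P V) : APG P V where
  L := G₁.L × G₂.L
  E := G₁.E × G₂.E
  lab := APG.prodLab G₁ G₂
  sch := fun l =>
    Ty.prod ((G₁.sch l.1).transport fun a => Ty.lbl (a, l.2))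
            ((G₂.sch l.2).transport fun b => Ty.lbl (l.1, b))
  val := fun e =>
    ⟨Ty.prod ((G₁.val e.1).1.transport fun a => Ty.lbl (a, G₂.lab e.2))
             ((G₂.val e.2).1.transport fun b => Ty.lbl (G₁.lab e.1, b)),
     Val.pair
       (Val.transport (lab₁ := G₁.lab) (lab₂ := APG.prodLab G₁ G₂)
         (fun a => Ty.lbl (a, G₂.lab e.2)) (fun a => Val.id (a, e.2)) (G₁.val e.1).2)
       (Val.transport (lab₁ := G₂.lab) (lab₂ := APG.prodLab G₁ G₂)
         (fun b => Ty.lbl (G₁.lab e.1, b)) (fun b => Val.id (e.1, b)) (G₂.val e.2).2)⟩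
  coh := fun e => by
    dsimp [APG.prodLab]
    rw [G₁.coh, G₂.coh]

/-- First projection morphism of the product APG. -/
def APG.prodFst (G₁ G₂ : APG P V) : APG.Hom (APG.prod G₁ G₂) G₁ :=
  ⟨Prod.fst, Prod.fst, fun _ => rfl⟩

/-- Second projection morphism of the product APG. -/
def APG.prodSnd (G₁ G₂ : APG P V) : APG.Hom (APG.prod G₁ G₂) G₂ :=
  ⟨Prod.snd, Prod.snd, fun _ => rfl⟩

/-- `G₁ × G₂`, with the set-theoretic projections, is a product
of `G₁` and `G₂` in the category `APG`: for every APG `G` and morphisms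
`p : G → G₁`, `q : G → G₂` there is a unique morphism `G → G₁ × G₂` whose
composites with the projections are `p` and `q`. -/
theorem apg_prod_is_product (P : Type) (V : P → Type) (G₁ G₂ : APG P V)
    (G : APG P V) (p : APG.Hom G G₁) (q : APG.Hom G G₂) :
    ∃ m : APG.Hom G (APG.prod G₁ G₂),
      (m.comp (APG.prodFst G₁ G₂) = p ∧ m.comp (APG.prodSnd G₁ G₂) = q) ∧
      ∀ m' : APG.Hom G (APG.prod G₁ G₂),
        (m'.comp (APG.prodFst G₁ G₂) = p ∧ m'.comp (APG.prodSnd G₁ G₂) = q) →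
        m' = m := by
  refine ⟨⟨fun l => (p.fL l, q.fL l), fun e => (p.fE e, q.fE e),
    fun e => Prod.ext (p.nat e) (q.nat e)⟩, ⟨rfl, rfl⟩, ?_⟩
  rintro m' ⟨rfl, rfl⟩
  rfl
end

section
/- For all APGs G₁ and G₂, the APG G₁ + G₂ defined by (G₁ + G₂)(𝓛) := G₁(𝓛) + G₂(𝓛) (disjoint union), (G₁ + G₂)(𝓔) := G₁(𝓔) + G₂(𝓔), (G₁ + G₂)(λ) := G₁(λ) + G₂(λ), (G₁ + G₂)(σ) acting on inl(l) as ⋄_{inl}(G₁(σ)(l)) and on inr(l) as ⋄_{inr}(G₂(σ)(l)) (transporting labels along the coproduct injections), and (G₁ + G₂)(υ) acting on inl(e) as ⋄^{inl}_{inl}(G₁(υ)(e)) and on inr(e) as ⋄^{inr}_{inr}(G₂(υ)(e)), together with the injection morphisms given componentwise by the set-theoretic injections, is a coproduct of G₁ and G₂ in the category APG: for every APG G and morphisms p : G₁ → G and q : G₂ → G there is a unique morphism (p | q) : G₁ + G₂ → G whose composites with the injections are p and q respectively. -/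
variable {P : Type} {V : P → Type}

/-- Labeling function of the coproduct APG. -/
def APG.coprodLab (G₁ G₂ : APG P V) : G₁.E ⊕ G₂.E → G₁.L ⊕ G₂.L :=
  Sum.map G₁.lab G₂.lab

/-- The coproduct APG `G₁ + G₂`: disjoint unions of labels and elements, with
schemas and values transported along the coproduct injections. -/
def APG.coprod (G₁ G₂ : APG P V) : APG P V where
  L := G₁.L ⊕ G₂.L
  E := G₁.E ⊕ G₂.E
  lab := APG.coprodLab G₁ G₂
  sch := Sum.elim (fun l => (G₁.sch l).transport fun a => Ty.lbl (Sum.inl a))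
                  (fun l => (G₂.sch l).transport fun b => Ty.lbl (Sum.inr b))
  val := fun e =>
    match e with
    | Sum.inl e =>
        ⟨(G₁.val e).1.transport fun a => Ty.lbl (Sum.inl a),
         Val.transport (lab₁ := G₁.lab) (lab₂ := APG.coprodLab G₁ G₂)
           (fun a => Ty.lbl (Sum.inl a)) (fun a => Val.id (Sum.inl a)) (G₁.val e).2⟩
    | Sum.inr e =>
        ⟨(G₂.val e).1.transport fun b => Ty.lbl (Sum.inr b),
         Val.transport (lab₁ := G₂.lab) (lab₂ := APG.coprodLab G₁ G₂)
           (fun b => Ty.lbl (Sum.inr b)) (fun b => Val.id (Sum.inr b)) (G₂.val e).2⟩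
  coh := fun e => by
    cases e with
    | inl e => dsimp [APG.coprodLab]; rw [G₁.coh]
    | inr e => dsimp [APG.coprodLab]; rw [G₂.coh]

/-- First injection morphism into the coproduct APG. -/
def APG.coprodInl (G₁ G₂ : APG P V) : APG.Hom G₁ (APG.coprod G₁ G₂) :=
  ⟨Sum.inl, Sum.inl, fun _ => rfl⟩

/-- Second injection morphism into the coproduct APG. -/
def APG.coprodInr (G₁ G₂ : APG P V) : APG.Hom G₂ (APG.coprod G₁ G₂) :=
  ⟨Sum.inr, Sum.inr, fun _ => rfl⟩

/-- `G₁ + G₂`, with the set-theoretic injections, is a coproduct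
of `G₁` and `G₂` in the category `APG`: for every APG `G` and morphisms
`p : G₁ → G`, `q : G₂ → G` there is a unique morphism `G₁ + G₂ → G` whose
composites with the injections are `p` and `q`. -/
theorem apg_coprod_is_coproduct (P : Type) (V : P → Type) (G₁ G₂ : APG P V)
    (G : APG P V) (p : APG.Hom G₁ G) (q : APG.Hom G₂ G) :
    ∃ m : APG.Hom (APG.coprod G₁ G₂) G,
      ((APG.coprodInl G₁ G₂).comp m = p ∧ (APG.coprodInr G₁ G₂).comp m = q) ∧
      ∀ m' : APG.Hom (APG.coprod G₁ G₂) G,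
        ((APG.coprodInl G₁ G₂).comp m' = p ∧ (APG.coprodInr G₁ G₂).comp m' = q) →
        m' = m := by
  refine ⟨⟨Sum.elim p.fL q.fL, Sum.elim p.fE q.fE, ?_⟩, ⟨rfl, rfl⟩, ?_⟩
  · rintro (e | e)
    · exact p.nat e
    · exact q.nat e
  · rintro m' ⟨rfl, rfl⟩
    apply APG.Hom.ext
    · funext l
      rcases l with l | l <;> rfl
    · funext e
      rcases e with e | e <;> rfl
end

section
/- The category APG has pullbacks of all cospans; consequently, since APG also has a terminal object, binary products, and equalizers, APG has all finite limits. -/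
open CategoryTheory

/-- The category `APG` of algebraic property graphs: morphisms are APG
morphisms, identities are pairs of identity functions, and composition is
componentwise. -/
instance APG.category (P : Type) (V : P → Type) : Category (APG P V) where
  Hom := APG.Hom
  id := APG.Hom.idHom
  comp := APG.Hom.comp
  id_comp := fun _ => rfl
  comp_id := fun _ => rfl
  assoc := fun _ _ _ => rfl

/-- The limit object: compatible families of labels and elements, with trivial schema. -/
def APG.limObj {P : Type} {V : P → Type} {J : Type} [SmallCategory J] (F : J ⥤ APG P V) :
    APG P V where
  L := {x : ∀ j, (F.obj j).L // ∀ {i j : J} (f : i ⟶ j), APG.Hom.fL (F.map f) (x i) = x j}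
  E := {x : ∀ j, (F.obj j).E // ∀ {i j : J} (f : i ⟶ j), APG.Hom.fE (F.map f) (x i) = x j}
  lab := fun x => ⟨fun j => (F.obj j).lab (x.1 j), fun {i j} f => by
    rw [APG.Hom.nat (F.map f), x.2 f]⟩
  sch := fun _ => .one
  val := fun _ => ⟨.one, .unit⟩
  coh := fun _ => rfl

/-- The limit cone. -/
def APG.limCone {P : Type} {V : P → Type} {J : Type} [SmallCategory J] (F : J ⥤ APG P V) :
    Limits.Cone F where
  pt := APG.limObj F
  π :=
    { app := fun j => (⟨fun x => x.1 j, fun x => x.1 j, fun _ => rfl⟩ :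
        APG.Hom (APG.limObj F) (F.obj j))
      naturality := fun i j f => by
        apply APG.Hom.ext
        · funext x
          exact (x.2 f).symm
        · funext x
          exact (x.2 f).symm }

/-- The limit cone is a limit. -/
def APG.limConeIsLimit {P : Type} {V : P → Type} {J : Type} [SmallCategory J]
    (F : J ⥤ APG P V) : Limits.IsLimit (APG.limCone F) where
  lift s := (⟨fun l => ⟨fun j => APG.Hom.fL (s.π.app j) l, fun {i j} f =>
        congrFun (congrArg APG.Hom.fL (s.w f)) l⟩,
      fun e => ⟨fun j => APG.Hom.fE (s.π.app j) e, fun {i j} f =>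
        congrFun (congrArg APG.Hom.fE (s.w f)) e⟩,
      fun e => Subtype.ext (funext fun j => APG.Hom.nat (s.π.app j) e)⟩ :
        APG.Hom s.pt (APG.limObj F))
  fac _ _ := rfl
  uniq s m hm := by
    apply APG.Hom.ext
    · funext l
      exact Subtype.ext (funext fun j => congrFun (congrArg APG.Hom.fL (hm j)) l)
    · funext e
      exact Subtype.ext (funext fun j => congrFun (congrArg APG.Hom.fE (hm j)) e)

/-- The category `APG` has pullbacks of all cospans;
consequently (having also a terminal object, binary products and equalizers)
it has all finite limits. -/
theorem apg_has_pullbacks_and_finite_limits (P : Type) (V : P → Type) :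
    Limits.HasPullbacks (APG P V) ∧ Limits.HasFiniteLimits (APG P V) := by
  have h : Limits.HasFiniteLimits (APG P V) :=
    ⟨fun J _ _ => ⟨fun F => ⟨⟨⟨APG.limCone F, APG.limConeIsLimit F⟩⟩⟩⟩⟩
  exact ⟨inferInstance, h⟩
end

section
/- There exist APGs G₁ and G₂ and an APG morphism h : G₁ → G₂ that does not underlie any natural transformation: take G₁(𝓛) = G₂(𝓛) = {l} with G₁(σ)(l) = 1 and G₂(σ)(l) = 0, take G₁(𝓔) = G₂(𝓔) = ∅, and take h = (id, id_∅); then no choice of functions h_𝓣 : G₁(𝓣) → G₂(𝓣) and h_𝓥 : G₁(𝓥) → G₂(𝓥) satisfies both the σ-naturality equation h_𝓣 ∘ G₁(σ) = G₂(σ) ∘ h_𝓛 and the τ-naturality equation h_𝓣 ∘ G₁(τ) = G₂(τ) ∘ h_𝓥, because these would force the existence of a value of type 0 in G₂(𝓥), and no value has type 0. Hence the morphisms of APG-NT form a proper subset of the morphisms of APG. -/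
/-- A natural transformation between APGs (viewed as functors `CD → Set`):
components on types, values, labels and elements, natural with respect to
`λ`, `σ`, `υ` and `τ`. -/
@[ext]
structure APG.NT {P : Type} {V : P → Type} (G₁ G₂ : APG P V) : Type where
  hT : Ty P G₁.L → Ty P G₂.L
  hV : VSig P V G₁.L G₁.E G₁.lab → VSig P V G₂.L G₂.E G₂.lab
  fL : G₁.L → G₂.L
  fE : G₁.E → G₂.E
  nat_lab : ∀ e, fL (G₁.lab e) = G₂.lab (fE e)
  nat_sch : ∀ l, hT (G₁.sch l) = G₂.sch (fL l)
  nat_val : ∀ e, hV (G₁.val e) = G₂.val (fE e)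
  nat_ty : ∀ v, hT v.1 = (hV v).1

/-- The identity natural transformation. -/
def APG.NT.idNT {P : Type} {V : P → Type} (G : APG P V) : APG.NT G G :=
  ⟨fun t => t, fun v => v, fun l => l, fun e => e,
   fun _ => rfl, fun _ => rfl, fun _ => rfl, fun _ => rfl⟩

/-- Componentwise composition of natural transformations. -/
def APG.NT.comp {P : Type} {V : P → Type} {G₁ G₂ G₃ : APG P V}
    (f : APG.NT G₁ G₂) (g : APG.NT G₂ G₃) : APG.NT G₁ G₃ where
  hT := g.hT ∘ f.hT
  hV := g.hV ∘ f.hV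
  fL := g.fL ∘ f.fL
  fE := g.fE ∘ f.fE
  nat_lab := fun e => by simp only [Function.comp_apply]; rw [f.nat_lab, g.nat_lab]
  nat_sch := fun l => by simp only [Function.comp_apply]; rw [f.nat_sch, g.nat_sch]
  nat_val := fun e => by simp only [Function.comp_apply]; rw [f.nat_val, g.nat_val]
  nat_ty := fun v => by simp only [Function.comp_apply]; rw [f.nat_ty, g.nat_ty]

/-- The APG with one label `l`, no elements, and schema `σ(l) = 1`. -/
def APG.exOne (P : Type) (V : P → Type) : APG P V where
  L := PUnit
  E := PEmpty
  lab := PEmpty.elim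
  sch := fun _ => Ty.one
  val := PEmpty.elim
  coh := fun e => e.elim

/-- The APG with one label `l`, no elements, and schema `σ(l) = 0`. -/
def APG.exZero (P : Type) (V : P → Type) : APG P V where
  L := PUnit
  E := PEmpty
  lab := PEmpty.elim
  sch := fun _ => Ty.zero
  val := PEmpty.elim
  coh := fun e => e.elim

/-- The identity-pair APG morphism from `exOne` to `exZero`. -/
def APG.exHom (P : Type) (V : P → Type) : APG.Hom (APG.exOne P V) (APG.exZero P V) :=
  ⟨fun l => l, fun e => e, fun e => e.elim⟩

/-- The APG morphism `exHom : exOne → exZero` underlies no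
natural transformation: no choice of type and value components satisfies both
the `σ`-naturality and `τ`-naturality equations (they would force a value of
type `0`).  Hence the morphisms of `APG-NT` form a proper subset of the
morphisms of `APG`. -/
theorem apg_hom_not_natural (P : Type) (V : P → Type) :
    (¬ ∃ (hT : Ty P (APG.exOne P V).L → Ty P (APG.exZero P V).L)
        (hV : VSig P V (APG.exOne P V).L (APG.exOne P V).E (APG.exOne P V).lab →
              VSig P V (APG.exZero P V).L (APG.exZero P V).E (APG.exZero P V).lab),
        (∀ l, hT ((APG.exOne P V).sch l) = (APG.exZero P V).sch ((APG.exHom P V).fL l)) ∧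
        (∀ v, hT v.1 = (hV v).1)) ∧
    ∃ (G₁ G₂ : APG P V) (m : APG.Hom G₁ G₂),
      ¬ ∃ h : APG.NT G₁ G₂, h.fL = m.fL ∧ h.fE = m.fE := by
  have key : ¬ ∃ (hT : Ty P (APG.exOne P V).L → Ty P (APG.exZero P V).L)
        (hV : VSig P V (APG.exOne P V).L (APG.exOne P V).E (APG.exOne P V).lab →
              VSig P V (APG.exZero P V).L (APG.exZero P V).E (APG.exZero P V).lab),
        (∀ l, hT ((APG.exOne P V).sch l) = (APG.exZero P V).sch ((APG.exHom P V).fL l)) ∧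
        (∀ v, hT v.1 = (hV v).1) := by
    rintro ⟨hT, hV, h1, h2⟩
    have a : hT Ty.one = Ty.zero := h1 PUnit.unit
    have b : hT Ty.one = (hV ⟨Ty.one, Val.unit⟩).1 := h2 ⟨Ty.one, Val.unit⟩
    have c : (hV ⟨Ty.one, Val.unit⟩).1 = Ty.zero := b.symm.trans a
    have d := (hV ⟨Ty.one, Val.unit⟩).2
    rw [c] at d
    cases d
  refine ⟨key, APG.exOne P V, APG.exZero P V, APG.exHom P V, ?_⟩
  rintro ⟨h, hL, _⟩
  exact key ⟨h.hT, h.hV, fun l => by rw [h.nat_sch, hL], h.nat_ty⟩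
end

section
/- For each schema S, the category S-APG, whose objects are the APGs on S and whose morphisms are the σ-preserving and υ-natural APG morphisms, has binary coproducts and an initial object: the initial object is the APG on S with empty element set, and the coproduct of G₁ and G₂ on S is the APG on S with element set G₁(𝓔) + G₂(𝓔), labeling induced by G₁(λ) and G₂(λ), and values obtained by transporting G₁(υ) and G₂(υ) along the element injections. -/
/-- A schema: a set of labels together with a type for each label. -/
structure Schema (P : Type) : Type 1 where
  L : Type
  sch : L → Ty P L

/-- An APG on a schema `S`: an APG whose label set is `S.L` and whose schema
function is `S.sch`. -/
structure APGOn (P : Type) (V : P → Type) (S : Schema P) : Type 1 where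
  E : Type
  lab : E → S.L
  val : E → VSig P V S.L E lab
  coh : ∀ e, (val e).1 = S.sch (lab e)

/-- A `σ`-preserving APG morphism between APGs on a common schema `S`: the label
component is the identity, so only the element function remains, commuting with
the labelings. -/
@[ext]
structure APGOn.Hom {P : Type} {V : P → Type} {S : Schema P}
    (G₁ G₂ : APGOn P V S) : Type where
  fE : G₁.E → G₂.E
  nat : ∀ e, G₁.lab e = G₂.lab (fE e)

/-- The identity `σ`-preserving morphism. -/
def APGOn.Hom.idHom {P : Type} {V : P → Type} {S : Schema P} (G : APGOn P V S) :
    APGOn.Hom G G :=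
  ⟨fun e => e, fun _ => rfl⟩

/-- Componentwise composition of `σ`-preserving morphisms. -/
def APGOn.Hom.comp {P : Type} {V : P → Type} {S : Schema P} {G₁ G₂ G₃ : APGOn P V S}
    (f : APGOn.Hom G₁ G₂) (g : APGOn.Hom G₂ G₃) : APGOn.Hom G₁ G₃ :=
  ⟨g.fE ∘ f.fE, fun e => by simp only [Function.comp_apply]; rw [f.nat, g.nat]⟩

/-- `⋄^g_{id}`: transport of values along a label-compatible element function,
keeping labels (and hence types) fixed: it replaces each `Id e` by `Id (fE e)`,
fixes `()` and `Prim d`, and commutes with `inl`, `inr` and pairing. -/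
def Val.mapE {P : Type} {V : P → Type} {L E₁ E₂ : Type} {lab₁ : E₁ → L}
    {lab₂ : E₂ → L} (fE : E₁ → E₂) (hc : ∀ e, lab₁ e = lab₂ (fE e)) :
    {t : Ty P L} → Val P V L E₁ lab₁ t → Val P V L E₂ lab₂ t
  | _, .unit => .unit
  | _, .inl v => .inl (v.mapE fE hc)
  | _, .inr v => .inr (v.mapE fE hc)
  | _, .pair v₁ v₂ => .pair (v₁.mapE fE hc) (v₂.mapE fE hc)
  | _, .prim p d => .prim p d
  | _, .id e =>
      cast (congrArg (fun x => Val P V L E₂ lab₂ (Ty.lbl x)) (hc e).symm)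
        (Val.id (fE e))

/-- `⋄^g_{id}` on typed values (elements of `G(𝓥)`). -/
def VSig.mapE {P : Type} {V : P → Type} {L E₁ E₂ : Type} {lab₁ : E₁ → L}
    {lab₂ : E₂ → L} (fE : E₁ → E₂) (hc : ∀ e, lab₁ e = lab₂ (fE e))
    (v : VSig P V L E₁ lab₁) : VSig P V L E₂ lab₂ :=
  ⟨v.1, v.2.mapE fE hc⟩

variable {P : Type} {V : P → Type} {S : Schema P}

theorem Val.mapE_cast {P : Type} {V : P → Type} {L E₁ E₂ : Type} {lab₁ : E₁ → L}
    {lab₂ : E₂ → L} (fE : E₁ → E₂) (hc : ∀ e, lab₁ e = lab₂ (fE e))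
    {l l' : L} (h : l = l') (v : Val P V L E₁ lab₁ (Ty.lbl l)) :
    Val.mapE fE hc (cast (congrArg (fun x => Val P V L E₁ lab₁ (Ty.lbl x)) h) v) =
    cast (congrArg (fun x => Val P V L E₂ lab₂ (Ty.lbl x)) h) (Val.mapE fE hc v) := by
  subst h; rfl

theorem Val.mapE_mapE {P : Type} {V : P → Type} {L E₁ E₂ E₃ : Type}
    {lab₁ : E₁ → L} {lab₂ : E₂ → L} {lab₃ : E₃ → L}
    (fE₁ : E₁ → E₂) (hc₁ : ∀ e, lab₁ e = lab₂ (fE₁ e))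
    (fE₂ : E₂ → E₃) (hc₂ : ∀ e, lab₂ e = lab₃ (fE₂ e))
    {t : Ty P L} (v : Val P V L E₁ lab₁ t) :
    Val.mapE fE₂ hc₂ (Val.mapE fE₁ hc₁ v) =
      Val.mapE (fE₂ ∘ fE₁) (fun e => (hc₁ e).trans (hc₂ (fE₁ e))) v := by
  induction v with
  | unit => rfl
  | inl v ih => simp only [Val.mapE, ih]
  | inr v ih => simp only [Val.mapE, ih]
  | pair v₁ v₂ ih₁ ih₂ => simp only [Val.mapE, ih₁, ih₂]
  | prim p d => rfl
  | id e =>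
      show Val.mapE fE₂ hc₂
          (cast (congrArg (fun x => Val P V L E₂ lab₂ (Ty.lbl x)) (hc₁ e).symm)
            (Val.id (fE₁ e))) = _
      rw [Val.mapE_cast]
      show cast _ (Val.mapE fE₂ hc₂ (Val.id (fE₁ e))) = _
      rw [show Val.mapE fE₂ hc₂ (Val.id (fE₁ e)) =
            cast (congrArg (fun x => Val P V L E₃ lab₃ (Ty.lbl x)) (hc₂ (fE₁ e)).symm)
              (Val.id (fE₂ (fE₁ e))) from rfl, cast_cast]
      · rfl
      · exact (hc₁ e).symm

theorem VSig.mapE_mapE {P : Type} {V : P → Type} {L E₁ E₂ E₃ : Type}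
    {lab₁ : E₁ → L} {lab₂ : E₂ → L} {lab₃ : E₃ → L}
    (fE₁ : E₁ → E₂) (hc₁ : ∀ e, lab₁ e = lab₂ (fE₁ e))
    (fE₂ : E₂ → E₃) (hc₂ : ∀ e, lab₂ e = lab₃ (fE₂ e))
    (v : VSig P V L E₁ lab₁) :
    VSig.mapE fE₂ hc₂ (VSig.mapE fE₁ hc₁ v) =
      VSig.mapE (fE₂ ∘ fE₁) (fun e => (hc₁ e).trans (hc₂ (fE₁ e))) v := by
  unfold VSig.mapE
  rw [Val.mapE_mapE]

theorem Val.mapE_id {P : Type} {V : P → Type} {L E : Type} {lab : E → L}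
    {t : Ty P L} (v : Val P V L E lab t) :
    Val.mapE (fun e => e) (fun _ => rfl) v = v := by
  induction v with
  | unit => rfl
  | inl v ih => simp only [Val.mapE, ih]
  | inr v ih => simp only [Val.mapE, ih]
  | pair v₁ v₂ ih₁ ih₂ => simp only [Val.mapE, ih₁, ih₂]
  | prim p d => rfl
  | id e => rfl

/-- A morphism of `S`-APG: a `σ`-preserving (`h_𝓛 = id`) and `υ`-natural APG
morphism between APGs on the schema `S`: transporting values along the element
function commutes with taking values. -/
structure APGOn.HomS {P : Type} {V : P → Type} {S : Schema P}
    (G₁ G₂ : APGOn P V S) : Type where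
  fE : G₁.E → G₂.E
  nat : ∀ e, G₁.lab e = G₂.lab (fE e)
  nat_val : ∀ e, VSig.mapE fE nat (G₁.val e) = G₂.val (fE e)

/-- The identity `S`-APG morphism. -/
def APGOn.HomS.idHom (G : APGOn P V S) : APGOn.HomS G G :=
  ⟨fun e => e, fun _ => rfl, fun e => by
    show (⟨(G.val e).1, Val.mapE (fun e => e) (fun _ => rfl) (G.val e).2⟩ :
        VSig P V S.L G.E G.lab) = G.val e
    rw [Val.mapE_id]
    rfl⟩

/-- Composition of `S`-APG morphisms. -/
def APGOn.HomS.comp {G₁ G₂ G₃ : APGOn P V S}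
    (f : APGOn.HomS G₁ G₂) (g : APGOn.HomS G₂ G₃) : APGOn.HomS G₁ G₃ :=
  ⟨g.fE ∘ f.fE,
   fun e => by simp only [Function.comp_apply]; rw [f.nat, g.nat],
   fun e => by
     simp only [Function.comp_apply]
     rw [← g.nat_val (f.fE e), ← f.nat_val e]
     exact (VSig.mapE_mapE f.fE f.nat g.fE g.nat (G₁.val e)).symm⟩

/-- The initial object of `S`-APG: the APG on `S` with empty element set. -/
def APGOn.initial (P : Type) (V : P → Type) (S : Schema P) : APGOn P V S where
  E := PEmpty
  lab := PEmpty.elim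
  val := PEmpty.elim
  coh := fun e => e.elim

/-- The coproduct of two APGs on `S`: disjoint union of elements, induced
labeling, and values transported along the element injections. -/
def APGOn.coprod (G₁ G₂ : APGOn P V S) : APGOn P V S where
  E := G₁.E ⊕ G₂.E
  lab := Sum.elim G₁.lab G₂.lab
  val := fun e =>
    match e with
    | Sum.inl e =>
        VSig.mapE (lab₂ := Sum.elim G₁.lab G₂.lab) Sum.inl (fun _ => rfl) (G₁.val e)
    | Sum.inr e =>
        VSig.mapE (lab₂ := Sum.elim G₁.lab G₂.lab) Sum.inr (fun _ => rfl) (G₂.val e)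
  coh := fun e => by
    cases e with
    | inl e => exact G₁.coh e
    | inr e => exact G₂.coh e

/-- First injection `S`-APG morphism into the coproduct. -/
def APGOn.coprodInl (G₁ G₂ : APGOn P V S) : APGOn.HomS G₁ (APGOn.coprod G₁ G₂) :=
  ⟨Sum.inl, fun _ => rfl, fun _ => rfl⟩

/-- Second injection `S`-APG morphism into the coproduct. -/
def APGOn.coprodInr (G₁ G₂ : APGOn P V S) : APGOn.HomS G₂ (APGOn.coprod G₁ G₂) :=
  ⟨Sum.inr, fun _ => rfl, fun _ => rfl⟩

/-- For each schema `S`, the category `S`-APG (APGs on `S`,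
with `σ`-preserving `υ`-natural morphisms) has an initial object — the APG on
`S` with empty element set — and binary coproducts — given by disjoint union of
elements with induced labeling and transported values. -/
theorem apgOnS_initial_and_coproducts (P : Type) (V : P → Type) (S : Schema P) :
    (∀ G : APGOn P V S, ∃ h : APGOn.HomS (APGOn.initial P V S) G,
        ∀ h' : APGOn.HomS (APGOn.initial P V S) G, h' = h) ∧
    (∀ (G₁ G₂ G : APGOn P V S) (p : APGOn.HomS G₁ G) (q : APGOn.HomS G₂ G),
        ∃ m : APGOn.HomS (APGOn.coprod G₁ G₂) G,
          ((APGOn.coprodInl G₁ G₂).comp m = p ∧ (APGOn.coprodInr G₁ G₂).comp m = q) ∧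
          ∀ m' : APGOn.HomS (APGOn.coprod G₁ G₂) G,
            ((APGOn.coprodInl G₁ G₂).comp m' = p ∧ (APGOn.coprodInr G₁ G₂).comp m' = q) →
            m' = m) := by
  have hext : ∀ {A B : APGOn P V S} (f g : APGOn.HomS A B), f.fE = g.fE → f = g := by
    rintro A B ⟨f, _, _⟩ ⟨g, _, _⟩ h
    cases h
    rfl
  refine ⟨fun G => ⟨⟨fun e => PEmpty.elim e, fun e => PEmpty.elim e,
    fun e => PEmpty.elim e⟩, fun h' => hext _ _ (funext fun e => PEmpty.elim e)⟩, ?_⟩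
  intro G₁ G₂ G p q
  have hn : ∀ e, (APGOn.coprod G₁ G₂).lab e = G.lab (Sum.elim p.fE q.fE e) := by
    rintro (e | e)
    · exact p.nat e
    · exact q.nat e
  refine ⟨⟨Sum.elim p.fE q.fE, hn, ?_⟩, ⟨hext _ _ rfl, hext _ _ rfl⟩, ?_⟩
  · rintro (e | e)
    · exact (VSig.mapE_mapE _ _ _ hn (G₁.val e)).trans (p.nat_val e)
    · exact (VSig.mapE_mapE _ _ _ hn (G₂.val e)).trans (q.nat_val e)
  · rintro m' ⟨h1, h2⟩
    apply hext
    funext e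
    rcases e with e | e
    · exact congrFun (congrArg APGOn.HomS.fE h1) e
    · exact congrFun (congrArg APGOn.HomS.fE h2) e
end

section
/- Well-definedness of the coproduct APG: for all APGs G₁ and G₂, the structure G₁ + G₂ defined by taking disjoint unions of labels and of elements, transporting the schemas along the label injections (σ(inl l) := ⋄_{inl}(G₁(σ)(l)), σ(inr l) := ⋄_{inr}(G₂(σ)(l))), and transporting the values along the label and element injections (υ(inl e) := ⋄^{inl}_{inl}(G₁(υ)(e)), υ(inr e) := ⋄^{inr}_{inr}(G₂(υ)(e))), satisfies the APG coherence equation (G₁ + G₂)(τ) ∘ (G₁ + G₂)(υ) = (G₁ + G₂)(σ) ∘ (G₁ + G₂)(λ), and is therefore an APG. -/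
variable {P : Type} {V : P → Type}

/-- Labeling function of the coproduct data: disjoint union of labelings. -/
def coprodLab (G₁ G₂ : APG P V) : G₁.E ⊕ G₂.E → G₁.L ⊕ G₂.L :=
  Sum.map G₁.lab G₂.lab

/-- Schema function of the coproduct data: schemas transported along the label
injections. -/
def coprodSch (G₁ G₂ : APG P V) : G₁.L ⊕ G₂.L → Ty P (G₁.L ⊕ G₂.L) :=
  Sum.elim (fun l => (G₁.sch l).transport fun a => Ty.lbl (Sum.inl a))
           (fun l => (G₂.sch l).transport fun b => Ty.lbl (Sum.inr b))

/-- Value function of the coproduct data: values transported along the label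
and element injections. -/
def coprodVal (G₁ G₂ : APG P V) :
    G₁.E ⊕ G₂.E → VSig P V (G₁.L ⊕ G₂.L) (G₁.E ⊕ G₂.E) (coprodLab G₁ G₂) :=
  fun e =>
    match e with
    | Sum.inl e =>
        VSig.transport (lab₁ := G₁.lab) (lab₂ := coprodLab G₁ G₂)
          (fun a => Ty.lbl (Sum.inl a)) (fun a => Val.id (Sum.inl a)) (G₁.val e)
    | Sum.inr e =>
        VSig.transport (lab₁ := G₂.lab) (lab₂ := coprodLab G₁ G₂)
          (fun b => Ty.lbl (Sum.inr b)) (fun b => Val.id (Sum.inr b)) (G₂.val e)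

/-- Well-definedness of the coproduct APG: the coproduct data
`G₁ + G₂` satisfies the APG coherence equation `τ ∘ υ = σ ∘ λ` — the type of
the (transported) value of each element equals the (transported) schema of its
label — and is therefore an APG. -/
theorem coprod_coherence (P : Type) (V : P → Type) (G₁ G₂ : APG P V) :
    (∀ e : G₁.E ⊕ G₂.E,
      (coprodVal G₁ G₂ e).1 = coprodSch G₁ G₂ (coprodLab G₁ G₂ e)) ∧
    ∃ H : APG P V, ∃ (_ : H.L = (G₁.L ⊕ G₂.L)) (_ : H.E = (G₁.E ⊕ G₂.E)),
      HEq H.lab (coprodLab G₁ G₂) ∧ HEq H.sch (coprodSch G₁ G₂) ∧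
      HEq H.val (coprodVal G₁ G₂) := by
  have h : ∀ e : G₁.E ⊕ G₂.E,
      (coprodVal G₁ G₂ e).1 = coprodSch G₁ G₂ (coprodLab G₁ G₂ e) := by
    rintro (e | e)
    · exact congrArg (Ty.transport fun a => Ty.lbl (Sum.inl a)) (G₁.coh e)
    · exact congrArg (Ty.transport fun b => Ty.lbl (Sum.inr b)) (G₂.coh e)
  exact ⟨h, ⟨_, _, coprodLab G₁ G₂, coprodSch G₁ G₂, coprodVal G₁ G₂, h⟩, rfl, rfl,
    HEq.rfl, HEq.rfl, HEq.rfl⟩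
end
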